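/- arXiv:2311.05123 — 8 statements merged into one kernel-verified Lean document; each statement's English description precedes it below -/
import Mathlib

section
/- Let n ≥ 1. For every v ∈ ℝ^{n+1} one has ‖ι_n(v)‖² = (|v₀|² + ⋯ + |v_n|²)² / r_n⁴, where ι_n is the inductively defined map over ℝ described in the context. In particular, if ‖v‖ = r_n then ι_n(v) lies on the unit sphere of its codomain. -/
/-!
The components of `iota n v` vanish from index `numComp n` on, so the series is a finite sum, and
the identity `‖ι_n(v)‖² = |v|⁴ / r_n⁴` follows by induction on `n`. For `n = 1` it is
`4 v₀² v₁² + (v₀² - v₁²)² = (v₀² + v₁²)²`. For the step, put `S = |v'|²`, `x = v_n²` and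
`R = r_{n-1}⁴`; the three blocks of components contribute

`(n+1)⁻¹ (S²/R + a_n² x S + b_n² (S - n x)²) = n² (S + x)² / ((n+1)(n²-1) R)`,

because `b_n² = 1/((n²-1) R)` and `a_n² = 2n(n+1) b_n²`. The recursion
`n² r_n⁴ = (n+1)(n²-1) r_{n-1}⁴` for the radii turns this into `(S + x)² / r_n⁴`.
-/

open scoped BigOperators

noncomputable section

/-- The radii `r_n` with `r_n^4 = ((n+1)/2)^2 (n-1)!`. -/
def rad (n : ℕ) : ℝ := ((((n : ℝ) + 1) / 2) ^ 2 * (Nat.factorial (n - 1) : ℝ)) ^ ((1 : ℝ) / 4)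

/-- The number of (field) components of `ι_n`. -/
def numComp : ℕ → ℕ
  | 0 => 2
  | 1 => 2
  | (m + 2) => numComp (m + 1) + (m + 2) + 1

/-- The inductively defined maps `ι_n : 𝕜^{n+1} → 𝕜^{L_n+1}` (over `𝕜 = ℝ`), recorded via
their components, written as a sequence indexed by `ℕ` that vanishes beyond the
dimension of the codomain.  Real components are embedded into `𝕜` via `algebraMap`. -/
def iota : (n : ℕ) → (Fin (n + 1) → ℝ) → ℕ → ℝ
  | 0, _, _ => 0
  | 1, v, j =>
      if j = 0 then 2 * v 0 * star (v 1)
      else if j = 1 then algebraMap ℝ ℝ (‖v 0‖ ^ 2 - ‖v 1‖ ^ 2)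
      else 0
  | (m + 2), v, j =>
      let c : ℝ := ((m : ℝ) + 3) ^ (-(1 : ℝ) / 2)
      let b : ℝ := ((((m : ℝ) + 2) ^ 2 - 1) * (rad (m + 1)) ^ 4) ^ (-(1 : ℝ) / 2)
      let a : ℝ := (2 * ((m : ℝ) + 2) * ((m : ℝ) + 3)) ^ ((1 : ℝ) / 2) * b
      if h : j < numComp (m + 1) then
        algebraMap ℝ ℝ c * iota (m + 1) (fun i => v i.castSucc) j
      else if h2 : j < numComp (m + 1) + (m + 2) then
        algebraMap ℝ ℝ (c * a) * star (v (Fin.last (m + 2))) *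
          v ⟨j - numComp (m + 1), by omega⟩
      else if j = numComp (m + 1) + (m + 2) then
        algebraMap ℝ ℝ (c * b *
          ((∑ i : Fin (m + 2), ‖v i.castSucc‖ ^ 2) - ((m : ℝ) + 2) * ‖v (Fin.last (m + 2))‖ ^ 2))
      else 0

lemma rad_pow_four (n : ℕ) :
    rad n ^ 4 = (((n : ℝ) + 1) / 2) ^ 2 * (Nat.factorial (n - 1) : ℝ) := by
  unfold rad
  rw [← Real.rpow_natCast, ← Real.rpow_mul (by positivity)]
  norm_num

lemma rad_pos (n : ℕ) : 0 < rad n := by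
  unfold rad
  positivity

/-- The recursion `n² r_n⁴ = (n+1)(n²-1) r_{n-1}⁴`, at `n = m + 2`. -/
lemma rad_pow_four_succ (m : ℕ) :
    ((m : ℝ) + 2) ^ 2 * rad (m + 2) ^ 4
      = ((m : ℝ) + 3) * (((m : ℝ) + 2) ^ 2 - 1) * rad (m + 1) ^ 4 := by
  rw [rad_pow_four, rad_pow_four]
  simp only [show m + 2 - 1 = m + 1 from rfl, show m + 1 - 1 = m from rfl, Nat.factorial_succ]
  push_cast
  ring

lemma iota_eq_zero_of_le (n : ℕ) (hn : 1 ≤ n) (v : Fin (n + 1) → ℝ) (j : ℕ)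
    (hj : numComp n ≤ j) : iota n v j = 0 := by
  match n, hn with
  | 1, _ =>
    simp only [numComp] at hj
    simp only [iota]
    rw [if_neg (by omega), if_neg (by omega)]
  | m + 2, _ =>
    simp only [numComp] at hj
    simp only [iota]
    rw [dif_neg (by omega), dif_neg (by omega), if_neg (by omega)]

lemma sq_rpow_neg_half {x : ℝ} (hx : 0 ≤ x) : (x ^ (-(1 : ℝ) / 2)) ^ 2 = x⁻¹ := by
  rw [← Real.rpow_natCast, ← Real.rpow_mul hx]
  norm_num [Real.rpow_neg_one]

lemma sq_rpow_half {x : ℝ} (hx : 0 ≤ x) : (x ^ ((1 : ℝ) / 2)) ^ 2 = x := by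
  rw [← Real.rpow_natCast, ← Real.rpow_mul hx]
  norm_num

lemma sum_sq_iota (m : ℕ) (v : Fin (m + 1 + 1) → ℝ) :
    ∑ j ∈ Finset.range (numComp (m + 1)), ‖iota (m + 1) v j‖ ^ 2
      = (∑ i, ‖v i‖ ^ 2) ^ 2 / rad (m + 1) ^ 4 := by
  induction m with
  | zero =>
    rw [rad_pow_four]
    simp only [numComp, iota, Finset.sum_range_succ]
    simp [mul_pow]
    ring
  | succ m ih =>
    set N := numComp (m + 1) with hN
    set c : ℝ := ((m : ℝ) + 3) ^ (-(1 : ℝ) / 2) with hc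
    set b : ℝ := ((((m : ℝ) + 2) ^ 2 - 1) * (rad (m + 1)) ^ 4) ^ (-(1 : ℝ) / 2) with hb
    set d : ℝ := (2 * ((m : ℝ) + 2) * ((m : ℝ) + 3)) ^ ((1 : ℝ) / 2) with hd
    set x : ℝ := v (Fin.last (m + 2)) with hx
    set S : ℝ := ∑ i : Fin (m + 2), ‖v i.castSucc‖ ^ 2 with hS
    have hR : 0 < rad (m + 1) ^ 4 := pow_pos (rad_pos _) 4
    have hR' : 0 < rad (m + 2) ^ 4 := pow_pos (rad_pos _) 4
    have hm : (0 : ℝ) < ((m : ℝ) + 2) ^ 2 - 1 := by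
      have : (0 : ℝ) ≤ m := Nat.cast_nonneg m
      nlinarith
    have hc2 : c ^ 2 = ((m : ℝ) + 3)⁻¹ := sq_rpow_neg_half (by positivity)
    have hb2 : b ^ 2 = ((((m : ℝ) + 2) ^ 2 - 1) * rad (m + 1) ^ 4)⁻¹ :=
      sq_rpow_neg_half (mul_pos hm hR).le
    have hd2 : d ^ 2 = 2 * ((m : ℝ) + 2) * ((m : ℝ) + 3) := sq_rpow_half (by positivity)
    have h1 : ∀ j ∈ Finset.range N, ‖iota (m + 2) v j‖ ^ 2
        = c ^ 2 * ‖iota (m + 1) (fun i => v i.castSucc) j‖ ^ 2 := by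
      intro j hj
      have hj' : j < numComp (m + 1) := Finset.mem_range.mp hj
      rw [iota, dif_pos hj', norm_mul, mul_pow]
      simp [hc]
    have h2 : ∀ i : Fin (m + 2), ‖iota (m + 2) v (N + i)‖ ^ 2
        = c ^ 2 * d ^ 2 * b ^ 2 * x ^ 2 * ‖v i.castSucc‖ ^ 2 := by
      intro i
      have hi := i.isLt
      have hv : ∀ h, v ⟨N + (i : ℕ) - numComp (m + 1), h⟩ = v i.castSucc := by
        intro h
        congr 1
        ext
        simp [hN]
      rw [iota, dif_neg (by omega), dif_pos (by omega), hv]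
      simp only [Real.norm_eq_abs, sq_abs, star_trivial, Algebra.algebraMap_self, RingHom.id_apply]
      ring
    have h3 : ‖iota (m + 2) v (N + (m + 2))‖ ^ 2
        = c ^ 2 * b ^ 2 * (S - ((m : ℝ) + 2) * x ^ 2) ^ 2 := by
      rw [iota, dif_neg (by omega), dif_neg (by omega), if_pos rfl]
      simp only [Real.norm_eq_abs, sq_abs, Algebra.algebraMap_self, RingHom.id_apply, hS]
      ring
    have hnum : numComp (m + 1 + 1) = N + (m + 2) + 1 := rfl
    rw [hnum, Finset.sum_range_succ, Finset.sum_range_add, Finset.sum_congr rfl h1,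
      ← Finset.mul_sum, ih, ← Fin.sum_univ_eq_sum_range
        (fun j => ‖iota (m + 2) v (N + j)‖ ^ 2) (m + 2),
      Finset.sum_congr rfl (fun i _ => h2 i), ← Finset.mul_sum, h3, hc2, hb2, hd2,
      Fin.sum_univ_castSucc (n := m + 2)]
    change _ = (S + ‖x‖ ^ 2) ^ 2 / rad (m + 2) ^ 4
    change _ * (S ^ 2 / _) + _ * S + _ = _
    have hrec := rad_pow_four_succ m
    have hrad : rad (m + 2) ^ 4
        = ((m : ℝ) + 3) * (((m : ℝ) + 2) ^ 2 - 1) * rad (m + 1) ^ 4 / ((m : ℝ) + 2) ^ 2 := by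
      rw [← hrec]
      field_simp
    rw [hrad, Real.norm_eq_abs, sq_abs]
    generalize rad (m + 1) ^ 4 = R at hR
    have hm' := hm.ne'
    field_simp
    ring

theorem norm_sq_iota_real (n : ℕ) (hn : 1 ≤ n) (v : Fin (n + 1) → ℝ) :
    (∑' j : ℕ, ‖iota n v j‖ ^ 2) = (∑ i, ‖v i‖ ^ 2) ^ 2 / (rad n) ^ 4 ∧
      (Real.sqrt (∑ i, ‖v i‖ ^ 2) = rad n → (∑' j : ℕ, ‖iota n v j‖ ^ 2) = 1) := by
  have key : (∑' j : ℕ, ‖iota n v j‖ ^ 2) = (∑ i, ‖v i‖ ^ 2) ^ 2 / (rad n) ^ 4 := by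
    rw [tsum_eq_sum (s := Finset.range (numComp n))]
    · obtain ⟨m, rfl⟩ : ∃ m, n = m + 1 := ⟨n - 1, by omega⟩
      exact sum_sq_iota m v
    · intro j hj
      rw [iota_eq_zero_of_le n hn v j (by simpa using hj)]
      simp
  refine ⟨key, fun h => ?_⟩
  have hS : (∑ i, ‖v i‖ ^ 2) = rad n ^ 2 := by
    rw [← h, Real.sq_sqrt (by positivity)]
  have hr := (rad_pos n).ne'
  rw [key, hS]
  field_simp

end
end

section
/- Let n, k be integers with n ≥ 3, 1 ≤ k ≤ n−1 and 2k ≠ n. Define φ : [0,1] → ℝ by φ(x) = ((k−x)/(n−2x))^{k/2} · ((n−k−x)/(n−2x))^{(n−k)/2}. Then φ is stationary at x = 0 (its one-sided derivative at 0, within [0,1], equals 0) and φ is strictly decreasing on the interval (0,1]. -/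
/-!
Write `a = k`, `b = n - k` and `D = a + b - 2x`. The two bases `(a - x)/D` and `(b - x)/D` have
derivatives `(a - b)/D²` and `(b - a)/D²`, so the logarithmic derivative of `φ` is
`(a - b)/(2D) * (a/(a - x) - b/(b - x)) = -x (a - b)² / (2 D (a - x) (b - x))`
(`hasDerivAt_volumeRatio`). It vanishes at `x = 0` and is negative on `(0, 1)` because `a ≠ b`.
Strict monotonicity extends to the endpoint `x = 1`, where a base may vanish, because `φ` is
continuous there: the exponents are nonnegative and `D > 0` as `n ≥ 3`.
-/

open Set

/-- The derivative of `φ` in logarithmic form, with `n = a + b`, at a point where both bases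
are positive. -/
lemma hasDerivAt_volumeRatio (n a x : ℝ) (ha : 0 < a - x) (hb : 0 < n - a - x) :
    HasDerivAt (fun x : ℝ => ((a - x) / (n - 2 * x)) ^ (a / 2) *
        ((n - a - x) / (n - 2 * x)) ^ ((n - a) / 2))
      (-(((a - x) / (n - 2 * x)) ^ (a / 2) * ((n - a - x) / (n - 2 * x)) ^ ((n - a) / 2)) *
        (x * (2 * a - n) ^ 2 / (2 * (n - 2 * x) * (a - x) * (n - a - x)))) x := by
  have hD : 0 < n - 2 * x := by linarith
  have hden : HasDerivAt (fun x : ℝ => n - 2 * x) (-2) x := by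
    simpa using ((hasDerivAt_id x).const_mul 2).const_sub n
  have h1 := (((hasDerivAt_id x).const_sub a).div hden hD.ne').rpow_const (p := a / 2)
    (Or.inl (div_pos ha hD).ne')
  have h2 := (((hasDerivAt_id x).const_sub (n - a)).div hden hD.ne').rpow_const
    (p := (n - a) / 2) (Or.inl (div_pos hb hD).ne')
  refine (h1.mul h2).congr_deriv ?_
  simp only [Pi.div_apply, id]
  rw [Real.rpow_sub_one (div_pos ha hD).ne', Real.rpow_sub_one (div_pos hb hD).ne']
  generalize ((a - x) / (n - 2 * x)) ^ (a / 2) = F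
  generalize ((n - a - x) / (n - 2 * x)) ^ ((n - a) / 2) = G
  have := ha.ne'
  have := hb.ne'
  have := hD.ne'
  field_simp
  ring

/-- For `n ≥ 3`, `1 ≤ k ≤ n−1`, `2k ≠ n`, the function
`φ(x) = ((k−x)/(n−2x))^{k/2} ((n−k−x)/(n−2x))^{(n−k)/2}` on `[0,1]` is stationary at `x = 0`
(its derivative within `[0,1]` at `0` vanishes) and strictly decreasing on `(0,1]`. -/
theorem volume_ratio_stationary_and_strictAnti (n k : ℤ) (hn : 3 ≤ n) (hk1 : 1 ≤ k)
    (hk2 : k ≤ n - 1) (hkn : 2 * k ≠ n) :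
    HasDerivWithinAt
      (fun x : ℝ =>
        (((k : ℝ) - x) / ((n : ℝ) - 2 * x)) ^ ((k : ℝ) / 2) *
          (((n : ℝ) - (k : ℝ) - x) / ((n : ℝ) - 2 * x)) ^ (((n : ℝ) - (k : ℝ)) / 2))
      0 (Icc (0 : ℝ) 1) 0 ∧
    StrictAntiOn
      (fun x : ℝ =>
        (((k : ℝ) - x) / ((n : ℝ) - 2 * x)) ^ ((k : ℝ) / 2) *
          (((n : ℝ) - (k : ℝ) - x) / ((n : ℝ) - 2 * x)) ^ (((n : ℝ) - (k : ℝ)) / 2))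
      (Ioc (0 : ℝ) 1) := by
  have hn' : (3 : ℝ) ≤ n := by exact_mod_cast hn
  have ha : (1 : ℝ) ≤ k := by exact_mod_cast hk1
  have hb : (1 : ℝ) ≤ n - k := by
    have : (k : ℝ) ≤ n - 1 := by exact_mod_cast hk2
    linarith
  have hne : (2 * k - n : ℝ) ≠ 0 := sub_ne_zero.mpr (by exact_mod_cast hkn)
  constructor
  · have h := hasDerivAt_volumeRatio n k 0 (by linarith) (by linarith)
    rw [zero_mul, zero_div, mul_zero] at h
    exact h.hasDerivWithinAt
  · apply strictAntiOn_of_deriv_neg (convex_Ioc 0 1)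
    · have hD : ∀ x ∈ Ioc (0 : ℝ) 1, (n : ℝ) - 2 * x ≠ 0 := fun x hx => by
        have := hx.2
        linarith
      apply ContinuousOn.mul
      · exact ContinuousOn.rpow_const (ContinuousOn.div (by fun_prop) (by fun_prop) hD)
          fun x _ => Or.inr (by linarith)
      · exact ContinuousOn.rpow_const (ContinuousOn.div (by fun_prop) (by fun_prop) hD)
          fun x _ => Or.inr (by linarith)
    · intro x hx
      rw [interior_Ioc] at hx
      obtain ⟨hx0, hx1⟩ := hx
      have hax : (0 : ℝ) < k - x := by linarith
      have hbx : (0 : ℝ) < n - k - x := by linarith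
      have hD : (0 : ℝ) < n - 2 * x := by linarith
      rw [(hasDerivAt_volumeRatio n k x hax hbx).deriv, neg_mul, neg_lt_zero]
      positivity
end

section
/- Let n, k be integers with n ≥ 3 and 1 ≤ k ≤ n−1. Then ((k−1)/(n−2))^{k/2} · ((n−k−1)/(n−2))^{(n−k)/2} ≤ (k/n)^{k/2} · ((n−k)/n)^{(n−k)/2}, with equality if and only if n = 2k. (This compares the volume of the Einstein product S^k(√((k−1)/(n−2)))×S^{n−k}(√((n−k−1)/(n−2))) with the volume of the minimally embedded product S^k(√(k/n))×S^{n−k}(√((n−k)/n)), after dividing both by ω_k·ω_{n−k}.) -/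
/-!
Write `m = n - k`. The squared Einstein radii satisfy `(k-1)/(n-2) + (m-1)/(n-2) = 1`, so the claim is
an instance of Gibbs' inequality: among `x, y ≥ 0` with `x + y = 1`, the product
`x ^ (k/2) * y ^ (m/2)` has its unique maximum at `(x, y) = (k/n, m/n)`, which follows from
`log t < t - 1` for `t ≠ 1`. Equality therefore means `(k-1)/(n-2) = k/n`, i.e. `n = 2k`.
-/

/-- Strict Gibbs inequality for two outcomes with probabilities `p`, `q`, the exponents being
`c * p` and `c * q`. -/
lemma rpow_mul_rpow_lt_of_add_eq_one {c p q x y : ℝ} (hc : 0 < c) (hp : 0 < p) (hq : 0 < q)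
    (hpq : p + q = 1) (hx : 0 ≤ x) (hy : 0 ≤ y) (hxy : x + y = 1) (hne : x ≠ p) :
    x ^ (c * p) * y ^ (c * q) < p ^ (c * p) * q ^ (c * q) := by
  have hR : 0 < p ^ (c * p) * q ^ (c * q) := by positivity
  rcases hx.eq_or_lt with rfl | hx
  · rwa [Real.zero_rpow (by positivity), zero_mul]
  rcases hy.eq_or_lt with rfl | hy
  · rwa [Real.zero_rpow (by positivity), mul_zero]
  have h1 : Real.log (x / p) < x / p - 1 :=
    Real.log_lt_sub_one_of_pos (by positivity) (by rwa [Ne, div_eq_one_iff_eq hp.ne'])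
  have h2 : Real.log (y / q) ≤ y / q - 1 := Real.log_le_sub_one_of_pos (by positivity)
  rw [Real.log_div hx.ne' hp.ne'] at h1
  rw [Real.log_div hy.ne' hq.ne'] at h2
  have h1' : p * (Real.log x - Real.log p) < x - p := by
    calc _ < p * (x / p - 1) := by gcongr
      _ = x - p := by field_simp
  have h2' : q * (Real.log y - Real.log q) ≤ y - q := by
    calc _ ≤ q * (y / q - 1) := by gcongr
      _ = y - q := by field_simp
  have h3 : p * (Real.log x - Real.log p) + q * (Real.log y - Real.log q) < 0 := by linarith
  rw [Real.rpow_def_of_pos hx, Real.rpow_def_of_pos hy, Real.rpow_def_of_pos hp,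
    Real.rpow_def_of_pos hq, ← Real.exp_add, ← Real.exp_add, Real.exp_lt_exp]
  nlinarith [mul_neg_of_pos_of_neg hc h3]

/-- Volume comparison between the Einstein product metric and the minimally embedded
product of spheres: for `n ≥ 3`, `1 ≤ k ≤ n−1`,
`((k−1)/(n−2))^{k/2}((n−k−1)/(n−2))^{(n−k)/2} ≤ (k/n)^{k/2}((n−k)/n)^{(n−k)/2}`,
with equality iff `n = 2k`. -/
theorem einstein_volume_le (n k : ℤ) (hn : 3 ≤ n) (hk1 : 1 ≤ k) (hk2 : k ≤ n - 1) :
    (((k : ℝ) - 1) / ((n : ℝ) - 2)) ^ ((k : ℝ) / 2) *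
        (((n : ℝ) - (k : ℝ) - 1) / ((n : ℝ) - 2)) ^ (((n : ℝ) - (k : ℝ)) / 2) ≤
      ((k : ℝ) / (n : ℝ)) ^ ((k : ℝ) / 2) *
        (((n : ℝ) - (k : ℝ)) / (n : ℝ)) ^ (((n : ℝ) - (k : ℝ)) / 2) ∧
    ((((k : ℝ) - 1) / ((n : ℝ) - 2)) ^ ((k : ℝ) / 2) *
        (((n : ℝ) - (k : ℝ) - 1) / ((n : ℝ) - 2)) ^ (((n : ℝ) - (k : ℝ)) / 2) =
      ((k : ℝ) / (n : ℝ)) ^ ((k : ℝ) / 2) *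
        (((n : ℝ) - (k : ℝ)) / (n : ℝ)) ^ (((n : ℝ) - (k : ℝ)) / 2) ↔ n = 2 * k) := by
  have hnR : (3 : ℝ) ≤ n := by exact_mod_cast hn
  have hk1R : (1 : ℝ) ≤ k := by exact_mod_cast hk1
  have hk2R : (k : ℝ) ≤ n - 1 := by exact_mod_cast hk2
  have hn0 : (0 : ℝ) < n := by linarith
  have hn2 : (0 : ℝ) < (n : ℝ) - 2 := by linarith
  by_cases h : n = 2 * k
  · have hR : (n : ℝ) = 2 * k := by exact_mod_cast h
    have e1 : ((k : ℝ) - 1) / ((n : ℝ) - 2) = k / n := by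
      rw [div_eq_div_iff hn2.ne' hn0.ne', hR]; ring
    have e2 : ((n : ℝ) - k - 1) / ((n : ℝ) - 2) = (n - k) / n := by
      rw [div_eq_div_iff hn2.ne' hn0.ne', hR]; ring
    rw [e1, e2]
    exact ⟨le_rfl, iff_of_true rfl h⟩
  · have hne : ((k : ℝ) - 1) / ((n : ℝ) - 2) ≠ k / n := by
      rw [Ne, div_eq_div_iff hn2.ne' hn0.ne']
      intro h'
      apply h
      have : (n : ℝ) = 2 * k := by linarith
      exact_mod_cast this
    have key := rpow_mul_rpow_lt_of_add_eq_one (c := (n : ℝ) / 2) (p := (k : ℝ) / n)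
      (q := ((n : ℝ) - k) / n) (x := ((k : ℝ) - 1) / ((n : ℝ) - 2))
      (y := ((n : ℝ) - k - 1) / ((n : ℝ) - 2)) (by positivity)
      (div_pos (by linarith) hn0) (div_pos (by linarith) hn0) (by field_simp; ring)
      (div_nonneg (by linarith) hn2.le) (div_nonneg (by linarith) hn2.le)
      (by rw [← add_div, div_eq_one_iff_eq hn2.ne']; ring) hne
    have e1 : (n : ℝ) / 2 * (k / n) = k / 2 := by field_simp
    have e2 : (n : ℝ) / 2 * ((n - k) / n) = (n - k) / 2 := by field_simp
    rw [e1, e2] at key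
    exact ⟨key.le, iff_of_false key.ne h⟩
end

section
/- Let n, k be integers with n ≥ 4 and 2 ≤ k ≤ n−2, and let r̄ := ((k−1)/(n−2))^{1/2}. Then the function f_{n,k} defined in the context is strictly decreasing on (0, r̄] and strictly increasing on [r̄, 1); consequently r̄ is the unique point of (0,1) at which f_{n,k} attains its minimum, and it is the unique critical point of f_{n,k} in (0,1). -/
/-!
Put `u = r² / (1 - r²)`, an increasing function of `r ∈ (0, 1)`, and `a = (n - k) / n`, `b = k / n`,
so that `a + b = 1`. Then `f_{n,k}(r) = Ω (k (k - 1) u ^ (-a) + (n - k) (n - k - 1) u ^ b)`, whose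
`u`-derivative is `Ω (k (n - k) / n) u ^ (-a - 1) ((n - k - 1) u - (k - 1))`. The last factor equals
`((n - 2) r² - (k - 1)) / (1 - r²)`, so the `r`-derivative of `f_{n,k}` is a positive multiple of
`(n - 2) r² - (k - 1)` (`hasDerivAt_scal`), which changes sign exactly at `r̄`. The monotonicity
statements follow from the sign of the derivative, and the uniqueness of the minimum point follows
from monotonicity.
-/

open Set

noncomputable section

/-- The normalizing constant `Ω_{n,k} = (n/k)^{k/n} (n/(n−k))^{(n−k)/n}`. -/
def Omega (n k : ℕ) : ℝ :=
  ((n : ℝ) / (k : ℝ)) ^ ((k : ℝ) / (n : ℝ)) *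
    ((n : ℝ) / ((n : ℝ) - (k : ℝ))) ^ (((n : ℝ) - (k : ℝ)) / (n : ℝ))

/-- The scalar curvature `f_{n,k}(r)` of the product metric on
`S^k(r) × S^{n−k}(√(1−r²))` rescaled to the volume of `S^{n,k}`. -/
def scal (n k : ℕ) (r : ℝ) : ℝ :=
  Omega n k *
    ((k : ℝ) * ((k : ℝ) - 1) * ((1 - r ^ 2) / r ^ 2) ^ (((n : ℝ) - (k : ℝ)) / (n : ℝ)) +
      ((n : ℝ) - (k : ℝ)) * ((n : ℝ) - (k : ℝ) - 1) *
        (r ^ 2 / (1 - r ^ 2)) ^ ((k : ℝ) / (n : ℝ)))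

lemma Omega_pos (n k : ℕ) (hk : 0 < k) (hkn : k < n) : 0 < Omega n k := by
  have hk' : (0 : ℝ) < k := by exact_mod_cast hk
  have hkn' : (k : ℝ) < n := by exact_mod_cast hkn
  have h1 : (0 : ℝ) < n := by linarith
  have h2 : (0 : ℝ) < n - k := by linarith
  unfold Omega
  positivity

lemma hasDerivAt_sq_div_one_sub_sq (r : ℝ) (hr : 1 - r ^ 2 ≠ 0) :
    HasDerivAt (fun x : ℝ => x ^ 2 / (1 - x ^ 2)) (2 * r / (1 - r ^ 2) ^ 2) r := by
  have h1 : HasDerivAt (fun x : ℝ => x ^ 2) (2 * r) r := by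
    simpa using hasDerivAt_pow 2 r
  have h2 : HasDerivAt (fun x : ℝ => 1 - x ^ 2) (-(2 * r)) r := by
    simpa using h1.const_sub 1
  refine (h1.div h2 hr).congr_deriv ?_
  congr 1
  ring

lemma scal_eq (n k : ℕ) (r : ℝ) (hr : r ∈ Ioo (0 : ℝ) 1) :
    scal n k r = Omega n k *
      ((k : ℝ) * ((k : ℝ) - 1) * (r ^ 2 / (1 - r ^ 2)) ^ (-(((n : ℝ) - (k : ℝ)) / (n : ℝ))) +
        ((n : ℝ) - (k : ℝ)) * ((n : ℝ) - (k : ℝ) - 1) *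
          (r ^ 2 / (1 - r ^ 2)) ^ ((k : ℝ) / (n : ℝ))) := by
  have h0 : 0 < r := hr.1
  have h1 : 0 < 1 - r ^ 2 := by nlinarith [hr.1, hr.2]
  have hu : 0 < r ^ 2 / (1 - r ^ 2) := by positivity
  rw [scal, Real.rpow_neg hu.le, ← Real.inv_rpow hu.le, inv_div]

/-- The sign of the derivative of `f_{n,k}` at `r` is that of `(n - 2) r² - (k - 1)`. -/
lemma hasDerivAt_scal (n k : ℕ) (hk : 0 < k) (hkn : k < n) (r : ℝ) (hr : r ∈ Ioo (0 : ℝ) 1) :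
    ∃ P : ℝ, 0 < P ∧
      HasDerivAt (scal n k) (P * (((n : ℝ) - 2) * r ^ 2 - ((k : ℝ) - 1))) r := by
  have hO := Omega_pos n k hk hkn
  have hk' : (0 : ℝ) < k := by exact_mod_cast hk
  have hkn' : (k : ℝ) < n := by exact_mod_cast hkn
  have hn0 : (0 : ℝ) < n := by linarith
  have hnk : (0 : ℝ) < n - k := by linarith
  have h0 : 0 < r := hr.1
  have h1 : 0 < 1 - r ^ 2 := by nlinarith [hr.1, hr.2]
  have hu : 0 < r ^ 2 / (1 - r ^ 2) := by positivity
  have hd := hasDerivAt_sq_div_one_sub_sq r h1.ne'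
  have hA := (hd.rpow_const (p := -(((n : ℝ) - k) / n)) (Or.inl hu.ne')).const_mul
    ((k : ℝ) * ((k : ℝ) - 1))
  have hB := (hd.rpow_const (p := (k : ℝ) / n) (Or.inl hu.ne')).const_mul
    (((n : ℝ) - (k : ℝ)) * ((n : ℝ) - (k : ℝ) - 1))
  have hC := (hA.add hB).const_mul (Omega n k)
  refine ⟨Omega n k * (k * (n - k) / n) *
    (r ^ 2 / (1 - r ^ 2)) ^ (-(((n : ℝ) - k) / n) - 1) * (2 * r / (1 - r ^ 2) ^ 3),
    by positivity, ?_⟩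
  refine (hC.congr_of_eventuallyEq ?_).congr_deriv ?_
  · filter_upwards [Ioo_mem_nhds hr.1 hr.2] with x hx using scal_eq n k x hx
  -- Since `a + b = 1`, the two powers of `u` differ by one factor `u`.
  have hpow : (r ^ 2 / (1 - r ^ 2)) ^ ((k : ℝ) / n - 1) =
      (r ^ 2 / (1 - r ^ 2)) ^ (-(((n : ℝ) - k) / n) - 1) * (r ^ 2 / (1 - r ^ 2)) := by
    rw [← Real.rpow_add_one hu.ne']
    congr 1
    field_simp
    ring
  rw [hpow]
  generalize (r ^ 2 / (1 - r ^ 2)) ^ (-(((n : ℝ) - k) / n) - 1) = W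
  have h1' := h1.ne'
  field_simp
  ring

/-- For `n ≥ 4`, `2 ≤ k ≤ n−2`, the normalized scalar curvature `f_{n,k}` is strictly
decreasing on `(0, r̄]` and strictly increasing on `[r̄, 1)`, where `r̄ = √((k−1)/(n−2))`;
consequently `r̄` is the unique minimum point of `f_{n,k}` on `(0,1)` and its unique
critical point there. -/
theorem scal_strictAnti_strictMono (n k : ℕ) (hn : 4 ≤ n) (hk1 : 2 ≤ k) (hk2 : k ≤ n - 2) :
    StrictAntiOn (scal n k) (Ioc 0 ((((k : ℝ) - 1) / ((n : ℝ) - 2)) ^ ((1 : ℝ) / 2))) ∧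
    StrictMonoOn (scal n k) (Ico ((((k : ℝ) - 1) / ((n : ℝ) - 2)) ^ ((1 : ℝ) / 2)) 1) ∧
    (∀ r ∈ Ioo (0 : ℝ) 1, (∀ s ∈ Ioo (0 : ℝ) 1, scal n k r ≤ scal n k s) ↔
      r = (((k : ℝ) - 1) / ((n : ℝ) - 2)) ^ ((1 : ℝ) / 2)) ∧
    (∀ r ∈ Ioo (0 : ℝ) 1, deriv (scal n k) r = 0 ↔
      r = (((k : ℝ) - 1) / ((n : ℝ) - 2)) ^ ((1 : ℝ) / 2)) := by
  have hkn : k < n := by omega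
  have hk2' : (k : ℝ) + 2 ≤ n := by
    have : k + 2 ≤ n := by omega
    exact_mod_cast this
  have hk1' : (2 : ℝ) ≤ k := by exact_mod_cast hk1
  have hd : ∀ r ∈ Ioo (0 : ℝ) 1, ∃ P : ℝ, 0 < P ∧
      HasDerivAt (scal n k) (P * (((n : ℝ) - 2) * r ^ 2 - ((k : ℝ) - 1))) r :=
    fun r hr => hasDerivAt_scal n k (by omega) hkn r hr
  have hn2 : (0 : ℝ) < n - 2 := by linarith
  have hq0 : 0 < ((k : ℝ) - 1) / ((n : ℝ) - 2) := div_pos (by linarith) hn2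
  have hq1 : ((k : ℝ) - 1) / ((n : ℝ) - 2) < 1 := by
    rw [div_lt_one hn2]; linarith
  rw [← Real.sqrt_eq_rpow]
  set R := √(((k : ℝ) - 1) / ((n : ℝ) - 2)) with hR
  have hR0 : 0 < R := Real.sqrt_pos.2 hq0
  have hRsq : ((n : ℝ) - 2) * R ^ 2 = (k : ℝ) - 1 := by
    rw [hR, Real.sq_sqrt hq0.le]; field_simp
  have hR1 : R < 1 := by
    rw [hR, Real.sqrt_lt' one_pos]; simpa using hq1
  have hfac : ∀ r : ℝ, ((n : ℝ) - 2) * r ^ 2 - ((k : ℝ) - 1) =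
      ((n : ℝ) - 2) * (r + R) * (r - R) := fun r => by rw [← hRsq]; ring
  have hanti : StrictAntiOn (scal n k) (Ioc 0 R) := by
    apply strictAntiOn_of_deriv_neg (convex_Ioc 0 R)
    · intro x hx
      obtain ⟨P, -, h⟩ := hd x ⟨hx.1, hx.2.trans_lt hR1⟩
      exact h.continuousAt.continuousWithinAt
    · intro x hx
      rw [interior_Ioc] at hx
      obtain ⟨P, hP, h⟩ := hd x ⟨hx.1, hx.2.trans hR1⟩
      have hxR : 0 < x + R := add_pos hx.1 hR0
      rw [h.deriv, hfac]
      exact mul_neg_of_pos_of_neg hP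
        (mul_neg_of_pos_of_neg (mul_pos hn2 hxR) (sub_neg.2 hx.2))
  have hmono : StrictMonoOn (scal n k) (Ico R 1) := by
    apply strictMonoOn_of_deriv_pos (convex_Ico R 1)
    · intro x hx
      obtain ⟨P, -, h⟩ := hd x ⟨hR0.trans_le hx.1, hx.2⟩
      exact h.continuousAt.continuousWithinAt
    · intro x hx
      rw [interior_Ico] at hx
      have hx0 := hR0.trans hx.1
      obtain ⟨P, hP, h⟩ := hd x ⟨hx0, hx.2⟩
      rw [h.deriv, hfac]
      exact mul_pos hP (mul_pos (mul_pos hn2 (add_pos hx0 hR0)) (sub_pos.2 hx.1))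
  have hmin : ∀ s ∈ Ioo (0 : ℝ) 1, s ≠ R → scal n k R < scal n k s := by
    intro s hs hsR
    rcases lt_or_gt_of_ne hsR with h | h
    · exact hanti ⟨hs.1, h.le⟩ ⟨hR0, le_rfl⟩ h
    · exact hmono ⟨le_rfl, hR1⟩ ⟨h.le, hs.2⟩ h
  refine ⟨hanti, hmono, fun r hr => ⟨fun h => ?_, ?_⟩, fun r hr => ?_⟩
  · by_contra hne
    exact absurd (h R ⟨hR0, hR1⟩) (not_le.2 (hmin r hr hne))
  · rintro rfl s hs
    rcases eq_or_ne s R with rfl | hne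
    · exact le_rfl
    · exact (hmin s hs hne).le
  · obtain ⟨P, hP, h⟩ := hd r hr
    have hrR : r + R ≠ 0 := (add_pos hr.1 hR0).ne'
    rw [h.deriv, hfac]
    simp [hP.ne', hn2.ne', hrR, sub_eq_zero]

end
end

section
/- Let n, k be integers with n ≥ 4 and 2 ≤ k ≤ n−2, and let r̄ := ((k−1)/(n−2))^{1/2}. Then f_{n,k}(r̄) ≤ n(n−2), with equality if and only if n = 2k, where f_{n,k} is the function defined in the context. (That is, the homothetically normalized Einstein product metric has scalar curvature at most n(n−2).) -/
/-!
Write `m = n - k`, `a = k - 1`, `b = m - 1`. At `r̄² = a / (n - 2)` one has `(1 - r̄²) / r̄² = b / a`,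
and the two summands of the curvature become `k` and `m` times the common factor
`a ^ (k/n) * b ^ (m/n)` (`curvature_sum_eq`). Absorbing the constant `Omega n k` gives the closed form
`n * ((n * a / k) ^ (k/n) * (n * b / m) ^ (m/n))` (`scal_einstein_eq`). Weighted AM-GM with weights
`k/n`, `m/n` bounds this by `n * (a + b) = n * (n - 2)`, with equality iff `a / k = b / m`, that is,
iff `k = m`.
-/

open Set

noncomputable section

lemma curvature_sum_eq {a b x y s t : ℝ} (ha : 0 < a) (hb : 0 < b) (hst : s + t = 1) :
    x * a * (b / a) ^ t + y * b * (a / b) ^ s = (x + y) * (a ^ s * b ^ t) := by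
  have hA : a ^ s * a ^ t = a := by rw [← Real.rpow_add ha, hst, Real.rpow_one]
  have hB : b ^ s * b ^ t = b := by rw [← Real.rpow_add hb, hst, Real.rpow_one]
  have h1 : a * (b / a) ^ t = a ^ s * b ^ t := by
    have : a ^ t ≠ 0 := (Real.rpow_pos_of_pos ha t).ne'
    rw [Real.div_rpow hb.le ha.le, mul_div_assoc', div_eq_iff this]
    linear_combination (-(b ^ t)) * hA
  have h2 : b * (a / b) ^ s = a ^ s * b ^ t := by
    have : b ^ s ≠ 0 := (Real.rpow_pos_of_pos hb s).ne'
    rw [Real.div_rpow ha.le hb.le, mul_div_assoc', div_eq_iff this]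
    linear_combination (-(a ^ s)) * hB
  linear_combination x * h1 + y * h2

lemma scal_einstein_eq {n k : ℕ} (hk : (2 : ℝ) ≤ k) (hm : (2 : ℝ) ≤ n - k) :
    scal n k ((((k : ℝ) - 1) / ((n : ℝ) - 2)) ^ ((1 : ℝ) / 2)) =
      n * ((n / k * ((k : ℝ) - 1)) ^ ((k : ℝ) / n) *
        (n / ((n : ℝ) - k) * ((n : ℝ) - k - 1)) ^ (((n : ℝ) - k) / n)) := by
  have ha : (0 : ℝ) < k - 1 := by linarith
  have hb : (0 : ℝ) < (n : ℝ) - k - 1 := by linarith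
  have hn2 : (0 : ℝ) < (n : ℝ) - 2 := by linarith
  have hn : (0 : ℝ) < n := by linarith
  have hr : ((((k : ℝ) - 1) / ((n : ℝ) - 2)) ^ ((1 : ℝ) / 2)) ^ 2 =
      ((k : ℝ) - 1) / ((n : ℝ) - 2) := by
    rw [← Real.sqrt_eq_rpow, Real.sq_sqrt (div_pos ha hn2).le]
  have hr' : 1 - ((k : ℝ) - 1) / ((n : ℝ) - 2) = ((n : ℝ) - k - 1) / ((n : ℝ) - 2) := by
    field_simp
    ring
  have hst : (k : ℝ) / n + ((n : ℝ) - k) / n = 1 := by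
    field_simp
    ring
  rw [scal, Omega, hr, hr', div_div_div_cancel_right₀ hn2.ne', div_div_div_cancel_right₀ hn2.ne',
    curvature_sum_eq ha hb hst,
    Real.mul_rpow (div_nonneg hn.le (by linarith)) ha.le,
    Real.mul_rpow (div_nonneg hn.le (by linarith)) hb.le]
  ring

/-- At `r̄ = √((k−1)/(n−2))`, i.e. for the (normalized) Einstein product metric, the
scalar curvature is at most `n(n−2)`, with equality iff `n = 2k`. -/
theorem scal_at_einstein_le (n k : ℕ) (hn : 4 ≤ n) (hk1 : 2 ≤ k) (hk2 : k ≤ n - 2) :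
    scal n k ((((k : ℝ) - 1) / ((n : ℝ) - 2)) ^ ((1 : ℝ) / 2)) ≤ (n : ℝ) * ((n : ℝ) - 2) ∧
    (scal n k ((((k : ℝ) - 1) / ((n : ℝ) - 2)) ^ ((1 : ℝ) / 2)) = (n : ℝ) * ((n : ℝ) - 2) ↔
      n = 2 * k) := by
  have hk : (2 : ℝ) ≤ k := by exact_mod_cast hk1
  have hm : (2 : ℝ) ≤ (n : ℝ) - k := by
    have : ((2 + k : ℕ) : ℝ) ≤ n := by
      exact_mod_cast (by omega : 2 + k ≤ n)
    push_cast at this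
    linarith
  have hn0 : (0 : ℝ) < n := by linarith
  have hk0 : (0 : ℝ) < k := by linarith
  have hm0 : (0 : ℝ) < (n : ℝ) - k := by linarith
  have hst : (k : ℝ) / n + ((n : ℝ) - k) / n = 1 := by
    field_simp
    ring
  have hp : 0 ≤ (n : ℝ) / k * ((k : ℝ) - 1) :=
    mul_nonneg (div_pos hn0 hk0).le (by linarith)
  have hq : 0 ≤ (n : ℝ) / ((n : ℝ) - k) * ((n : ℝ) - k - 1) :=
    mul_nonneg (div_pos hn0 hm0).le (by linarith)
  have hmean : (k : ℝ) / n * (n / k * ((k : ℝ) - 1)) +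
      ((n : ℝ) - k) / n * (n / ((n : ℝ) - k) * ((n : ℝ) - k - 1)) = (n : ℝ) - 2 := by
    field_simp
    ring
  have hle := Real.geom_mean_le_arith_mean2_weighted
    (div_pos hk0 hn0).le (div_pos hm0 hn0).le hp hq hst
  have heq := Real.geom_mean_eq_arith_mean2_weighted_iff_of_pos
    (div_pos hk0 hn0) (div_pos hm0 hn0) hp hq hst
  rw [hmean] at hle heq
  rw [scal_einstein_eq hk hm]
  refine ⟨mul_le_mul_of_nonneg_left hle hn0.le, ?_⟩
  rw [mul_right_inj' hn0.ne', heq]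
  have hcast : n = 2 * k ↔ (n : ℝ) = 2 * k := by exact_mod_cast Iff.rfl
  -- The cross-multiplied difference factors as `n * (2 * k - n)`.
  rw [hcast, div_mul_eq_mul_div, div_mul_eq_mul_div, div_eq_div_iff hk0.ne' hm0.ne']
  constructor
  · intro h
    apply mul_left_cancel₀ hn0.ne'
    linear_combination -h
  · intro h
    linear_combination -(n : ℝ) * h

end
end

section
/- Let n, k be integers with 2 ≤ k and 2k < n, and let r̄ := ((k−1)/(n−2))^{1/2}. Then there exists a unique a with 0 < a < r̄ such that { r ∈ (0,1) : f_{n,k}(r) ≤ n(n−2) } is exactly the closed interval [a, √(k/n)], where f_{n,k} is the function defined in the context. -/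
/-!
In the variable `t = (1 - r²)/r²`, which decreases from `∞` to `0` on `(0,1)`, and with `q = k/n`,
multiplying the inequality `f(r) ≤ n(n-2)` by `t^q` turns it into `g(t) ≥ 0`, where
`g(t) = n(n-2) t^q - Ω (k(k-1) t + (n-k)(n-k-1))` is strictly concave on `[0, ∞)`.
The value `t₁ = (n-k)/k` (that is, `r² = k/n`) is a zero of `g`. The critical point of `f` is
`t* = (n-k-1)/(k-1)` (that is, `r² = (k-1)/(n-2)`), it exceeds `t₁` because `2k < n`, and
`g(t*) > 0` by the strict Bernoulli inequality for `(t₁/t*)^q` (`line_lt_at_critical`).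
Since `g` is eventually negative, it has a second zero `t₂ > t*`, and by strict concavity
`g ≥ 0` exactly on `[t₁, t₂]` (`exists_sublevel_Icc`). Then `a = (1 + t₂)^(-1/2)`.
-/

open Set

noncomputable section

/-- If `α t + β` meets `γ t ^ q` at `t₁`, and `s ≠ t₁` is the critical point of
`(α t + β) / t ^ q` (the condition `β q = α (1 - q) s`), then the line lies strictly below
`γ t ^ q` at `s`. -/
lemma line_lt_at_critical {α β γ q t₁ s : ℝ} (hα : 0 < α) (hq0 : 0 < q) (hq1 : q < 1)
    (ht₁ : 0 < t₁) (hs : 0 < s) (hne : t₁ ≠ s) (hcrit : β * q = α * (1 - q) * s)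
    (hroot : α * t₁ + β = γ * t₁ ^ q) : α * s + β < γ * s ^ q := by
  have hx : 0 < t₁ / s := by positivity
  have hx1 : t₁ / s - 1 ≠ 0 := by
    rw [sub_ne_zero, ne_eq, div_eq_one_iff_eq hs.ne']
    exact hne
  have hB : (t₁ / s) ^ q < 1 + q * (t₁ / s - 1) := by
    have := rpow_one_add_lt_one_add_mul_self (s := t₁ / s - 1) (by linarith) hx1 hq0 hq1
    simpa using this
  have hpow : t₁ ^ q = (t₁ / s) ^ q * s ^ q := by
    rw [← Real.mul_rpow hx.le hs.le, div_mul_cancel₀ _ (ne_of_gt hs)]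
  -- `α t + β` is, up to the factor `α s + β`, the tangent line `1 + q (t/s - 1)` at `s`.
  have hline : α * t₁ + β = (α * s + β) * (1 + q * (t₁ / s - 1)) := by
    have hβ : β = α * (1 - q) * s / q := by field_simp; linarith
    rw [hβ]; field_simp; ring
  have hpos : 0 < α * s + β := by
    have : 0 < β * q := by
      rw [hcrit]; have : 0 < 1 - q := by linarith
      positivity
    have : 0 < β := pos_of_mul_pos_left this hq0.le
    positivity
  have hxq : 0 < (t₁ / s) ^ q := Real.rpow_pos_of_pos hx q
  have h : (α * s + β) * (t₁ / s) ^ q < (γ * s ^ q) * (t₁ / s) ^ q := by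
    calc (α * s + β) * (t₁ / s) ^ q < (α * s + β) * (1 + q * (t₁ / s - 1)) :=
          mul_lt_mul_of_pos_left hB hpos
      _ = γ * t₁ ^ q := by rw [← hline, hroot]
      _ = _ := by rw [hpow]; ring
  exact lt_of_mul_lt_mul_right h hxq.le

/-- A line `α t + β` that meets `γ t ^ q` at `t₁` and is strictly below it at some `s > t₁`
is below it on exactly an interval `[t₁, t₂]` with `t₂ > s`. -/
lemma exists_sublevel_Icc {α β γ q t₁ s : ℝ} (hα : 0 < α) (hβ : 0 < β) (hγ : 0 < γ)
    (hq0 : 0 < q) (hq1 : q < 1) (ht₁ : 0 < t₁) (hs : t₁ < s)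
    (hroot : α * t₁ + β = γ * t₁ ^ q) (hneg : α * s + β < γ * s ^ q) :
    ∃ t₂, s < t₂ ∧ ∀ t, 0 < t → (α * t + β ≤ γ * t ^ q ↔ t₁ ≤ t ∧ t ≤ t₂) := by
  set g : ℝ → ℝ := fun t => γ * t ^ q - (α * t + β) with hg
  -- Strict concavity of `g`, in the form of a strict inequality at every interior point.
  have hconc : ∀ x y z : ℝ, 0 < x → x < y → y < z → 0 ≤ g x → 0 ≤ g z → 0 < g y := by
    intro x y z hx hxy hyz hgx hgz
    have hzx : 0 < z - x := by linarith
    have e : (z - y) / (z - x) * x + (y - x) / (z - x) * z = y := by field_simp; ring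
    have ha : 0 < (z - y) / (z - x) := div_pos (by linarith) hzx
    have hb : 0 < (y - x) / (z - x) := div_pos (by linarith) hzx
    have hab : (z - y) / (z - x) + (y - x) / (z - x) = 1 := by field_simp; ring
    have hc := (Real.strictConcaveOn_rpow hq0 hq1).2 (mem_Ici.2 hx.le)
      (mem_Ici.2 (hx.le.trans (hxy.trans hyz).le)) (hxy.trans hyz).ne ha hb hab
    simp only [smul_eq_mul] at hc
    rw [e] at hc
    generalize (z - y) / (z - x) = a at *
    generalize (y - x) / (z - x) = b at *
    have h1 := mul_nonneg ha.le hgx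
    have h2 := mul_nonneg hb.le hgz
    have h3 := mul_lt_mul_of_pos_left hc hγ
    have h4 : α * y + β = a * (α * x + β) + b * (α * z + β) := by
      rw [← e]; linear_combination (-β) * hab
    simp only [hg] at h1 h2 ⊢
    rw [h4]
    linarith
  obtain ⟨T, hT, hTs⟩ : ∃ T, γ / α < T ^ (1 - q) ∧ s < T :=
    (((tendsto_rpow_atTop (by linarith : 0 < 1 - q)).eventually_gt_atTop (γ / α)).and
      (Filter.eventually_gt_atTop s)).exists
  have hT0 : 0 < T := by linarith
  have hgT : g T < 0 := by
    have h1 : T ^ (1 - q) * T ^ q = T := by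
      rw [← Real.rpow_add hT0]; simp
    have h2 : γ < T ^ (1 - q) * α := (div_lt_iff₀ hα).1 hT
    have h3 := mul_lt_mul_of_pos_right h2 (Real.rpow_pos_of_pos hT0 q)
    have h4 : T ^ (1 - q) * α * T ^ q = α * T := by linear_combination α * h1
    simp only [hg]
    linarith
  have hcont : ContinuousOn g (Icc s T) := by
    have := Real.continuous_rpow_const hq0.le
    exact (by fun_prop : Continuous g).continuousOn
  have hgs : 0 < g s := by simp only [hg]; linarith
  obtain ⟨t₂, ⟨hst, -⟩, h0⟩ := intermediate_value_Ioo' hTs.le hcont ⟨hgT, hgs⟩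
  have hg1 : g t₁ = 0 := by simp only [hg]; linarith
  refine ⟨t₂, hst, fun t ht => ?_⟩
  have hiff : α * t + β ≤ γ * t ^ q ↔ 0 ≤ g t := by simp only [hg, sub_nonneg]
  rw [hiff]
  constructor
  · intro h
    constructor
    · by_contra! hlt
      exact (hconc t t₁ t₂ ht hlt (by linarith) h h0.ge).ne' hg1
    · by_contra! hlt
      exact (hconc t₁ t₂ t ht₁ (by linarith) hlt hg1.ge h).ne' h0
  · rintro ⟨h1, h2⟩
    rcases h1.eq_or_lt with rfl | h1
    · exact hg1.ge
    rcases h2.eq_or_lt with rfl | h2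
    · exact h0.ge
    exact (hconc t₁ t t₂ ht₁ h1 h2 hg1.ge h0.ge).le

lemma Omega_mul_rpow {n k : ℕ} (hk : 0 < (k : ℝ)) (hkn : (k : ℝ) < n) :
    (n : ℝ) / k = Omega n k * (((n : ℝ) - k) / k) ^ (((n : ℝ) - k) / n) := by
  have hn : 0 < (n : ℝ) := by linarith
  have hd : 0 < (n : ℝ) - k := by linarith
  rw [Omega, mul_assoc, ← Real.mul_rpow (by positivity) (by positivity)]
  have e : (n : ℝ) / (n - k) * ((n - k) / k) = n / k := by field_simp
  rw [e, ← Real.rpow_add (by positivity)]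
  have e2 : (k : ℝ) / n + (n - k) / n = 1 := by field_simp; ring
  rw [e2, Real.rpow_one]

lemma scal_le_iff {n k : ℕ} (hk : 0 < (k : ℝ)) (hkn : (k : ℝ) < n) {r : ℝ} (hr : r ∈ Ioo (0 : ℝ) 1)
    (N : ℝ) : scal n k r ≤ N ↔
      Omega n k * (k * (k - 1)) * ((1 - r ^ 2) / r ^ 2) +
        Omega n k * ((n - k) * (n - k - 1)) ≤ N * ((1 - r ^ 2) / r ^ 2) ^ ((k : ℝ) / n) := by
  have hn : 0 < (n : ℝ) := by linarith
  have hr0 := hr.1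
  have h1 : 0 < 1 - r ^ 2 := by nlinarith [hr.1, hr.2]
  have ht : 0 < (1 - r ^ 2) / r ^ 2 := by positivity
  have hinv : r ^ 2 / (1 - r ^ 2) = ((1 - r ^ 2) / r ^ 2)⁻¹ := by rw [inv_div]
  rw [scal, hinv]
  generalize (1 - r ^ 2) / r ^ 2 = t at ht
  have hq := Real.rpow_pos_of_pos ht ((k : ℝ) / n)
  have hp : t ^ (((n : ℝ) - k) / n) * t ^ ((k : ℝ) / n) = t := by
    rw [← Real.rpow_add ht]
    have e2 : ((n : ℝ) - k) / n + k / n = 1 := by field_simp; ring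
    rw [e2, Real.rpow_one]
  rw [Real.inv_rpow ht.le, ← mul_le_mul_iff_left₀ hq]
  have hi : (t ^ ((k : ℝ) / n))⁻¹ * t ^ ((k : ℝ) / n) = 1 := inv_mul_cancel₀ hq.ne'
  refine iff_of_eq (congrArg (· ≤ _) ?_)
  linear_combination Omega n k * (k * (k - 1)) * hp + Omega n k * ((n - k) * (n - k - 1)) * hi

/-- For `2 ≤ k` and `2k < n`, there is a unique `a` with `0 < a < √((k−1)/(n−2))` such that
the sublevel set `{r ∈ (0,1) : f_{n,k}(r) ≤ n(n−2)}` is exactly the interval `[a, √(k/n)]`. -/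
theorem scal_sublevel_eq_Icc (n k : ℕ) (hk1 : 2 ≤ k) (hkn : 2 * k < n) :
    ∃! a : ℝ,
      (0 < a ∧ a < (((k : ℝ) - 1) / ((n : ℝ) - 2)) ^ ((1 : ℝ) / 2)) ∧
        {r : ℝ | r ∈ Ioo (0 : ℝ) 1 ∧ scal n k r ≤ (n : ℝ) * ((n : ℝ) - 2)} =
          Icc a (Real.sqrt ((k : ℝ) / (n : ℝ))) := by
  have hk2 : (2 : ℝ) ≤ k := by exact_mod_cast hk1
  have hkn' : 2 * (k : ℝ) < n := by exact_mod_cast hkn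
  have hk0 : (0 : ℝ) < k := by linarith
  have hn0 : (0 : ℝ) < n := by linarith
  have hlt : (k : ℝ) < n := by linarith
  have hd : (0 : ℝ) < n - k := by linarith
  have hd1 : (0 : ℝ) < n - k - 1 := by linarith
  have hk3 : (0 : ℝ) < k - 1 := by linarith
  have hn2 : (0 : ℝ) < n - 2 := by linarith
  have hΩ : 0 < Omega n k := by unfold Omega; positivity
  have hq0 : 0 < (k : ℝ) / n := by positivity
  have hq1 : (k : ℝ) / n < 1 := (div_lt_one hn0).2 hlt
  have ht₁ : 0 < ((n : ℝ) - k) / k := by positivity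
  have hs0 : 0 < ((n : ℝ) - k - 1) / (k - 1) := by positivity
  have hs : ((n : ℝ) - k) / k < (n - k - 1) / (k - 1) := by
    rw [div_lt_div_iff₀ hk0 hk3]; nlinarith
  have hroot : Omega n k * (k * (k - 1)) * (((n : ℝ) - k) / k) +
      Omega n k * ((n - k) * (n - k - 1)) =
        n * (n - 2) * (((n : ℝ) - k) / k) ^ ((k : ℝ) / n) := by
    have h := Omega_mul_rpow hk0 hlt
    have hp : (((n : ℝ) - k) / k) ^ (((n : ℝ) - k) / n) * (((n : ℝ) - k) / k) ^ ((k : ℝ) / n)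
        = ((n : ℝ) - k) / k := by
      rw [← Real.rpow_add ht₁]
      have e2 : ((n : ℝ) - k) / n + k / n = 1 := by field_simp; ring
      rw [e2, Real.rpow_one]
    generalize (((n : ℝ) - k) / k) ^ (((n : ℝ) - k) / n) = P at *
    generalize (((n : ℝ) - k) / k) ^ ((k : ℝ) / n) = Q at *
    have h' : Omega n k * (n - k) = n * Q := by
      have h1 : (n : ℝ) = Omega n k * P * k := by rw [← h]; field_simp
      have h2 : P * Q * k = n - k := by rw [hp]; field_simp
      linear_combination (-Omega n k) * h2 - Q * h1
    have e : Omega n k * (k * (k - 1)) * (((n : ℝ) - k) / k) = Omega n k * (n - k) * (k - 1) := by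
      field_simp
    rw [e]
    linear_combination (n - 2 : ℝ) * h'
  have hneg := line_lt_at_critical (by positivity) hq0 hq1 ht₁ hs0 hs.ne
    (by field_simp) hroot
  obtain ⟨t₂, hst, hiff⟩ := exists_sublevel_Icc (by positivity) (by positivity) (by positivity)
    hq0 hq1 ht₁ hs hroot hneg
  have ht₂ : 0 < 1 + t₂ := by linarith
  have hrbar : ((k : ℝ) - 1) / (n - 2) = 1 / (1 + (n - k - 1) / (k - 1)) := by
    field_simp; ring
  have hrk : √(((k : ℝ) - 1) / (n - 2)) < √((k : ℝ) / n) := by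
    apply Real.sqrt_lt_sqrt (by positivity)
    rw [div_lt_div_iff₀ hn2 hn0]; nlinarith
  rw [← Real.sqrt_eq_rpow]
  have ha : √(1 / (1 + t₂)) < √(((k : ℝ) - 1) / (n - 2)) := by
    apply Real.sqrt_lt_sqrt (by positivity)
    rw [hrbar]
    exact one_div_lt_one_div_of_lt (by positivity) (by linarith)
  have ha0 : 0 < √(1 / (1 + t₂)) := Real.sqrt_pos.2 (by positivity)
  have hset : {r : ℝ | r ∈ Ioo (0 : ℝ) 1 ∧ scal n k r ≤ (n : ℝ) * ((n : ℝ) - 2)} =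
      Icc √(1 / (1 + t₂)) √((k : ℝ) / n) := by
    have key : ∀ r ∈ Ioo (0 : ℝ) 1, (scal n k r ≤ (n : ℝ) * ((n : ℝ) - 2) ↔
        r ∈ Icc √(1 / (1 + t₂)) √((k : ℝ) / n)) := by
      intro r hr
      have hr0 := hr.1
      have h1 : 0 < 1 - r ^ 2 := by nlinarith [hr.1, hr.2]
      rw [scal_le_iff hk0 hlt hr, hiff _ (by positivity), and_comm, mem_Icc,
        Real.sqrt_le_left hr0.le, Real.le_sqrt hr0.le (by positivity),
        div_le_iff₀ (by positivity), div_le_iff₀ ht₂,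
        div_le_div_iff₀ hk0 (by positivity), le_div_iff₀ hn0]
      constructor <;> rintro ⟨h2, h3⟩ <;> constructor <;> linarith
    ext r
    constructor
    · rintro ⟨hr, h⟩
      exact (key r hr).1 h
    · intro h
      have hr : r ∈ Ioo (0 : ℝ) 1 := by
        refine ⟨ha0.trans_le h.1, h.2.trans_lt ?_⟩
        rw [Real.sqrt_lt' one_pos]
        simpa using hq1
      exact ⟨hr, (key r hr).2 h⟩
  refine ⟨_, ⟨⟨ha0, ha⟩, hset⟩, ?_⟩
  rintro b ⟨⟨-, hb⟩, hset'⟩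
  rw [hset] at hset'
  apply le_antisymm
  · exact (hset' ▸ left_mem_Icc.2 (ha.trans hrk).le : _ ∈ Icc b √((k : ℝ) / n)).1
  · exact (hset'.symm ▸ left_mem_Icc.2 (hb.trans hrk).le :
      b ∈ Icc √(1 / (1 + t₂)) √((k : ℝ) / n)).1

end
end

section
/- Let n, k be integers with n ≥ 3 and 1 ≤ k ≤ n−1. Then 0 < (ω_n / μ_{n,k})^{2/n} < n − 2, where ω_m denotes the volume of the unit m-sphere and μ_{n,k} the volume of S^k(√(k/n))×S^{n−k}(√((n−k)/n)), as defined in the context. -/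
/-!
Put `p = k/n`, `q = 1 - p`, and let `r = ω_n / (ω_k ω_{n-k})`. Then
`(ω_n / μ_{n,k})^{2/n} = r^{2/n} / (p^p q^q)`, and weighted AM-GM gives `p^p q^q ≥ 1/2`
(the entropy of a two-point distribution is at most `log 2`). It therefore suffices that
`2 r^{2/n} < n - 2`.

In terms of the Gamma function, `r = Γ((k+1)/2) Γ((n-k+1)/2) / (2 √π Γ((n+1)/2))`. Log-convexity of
`Γ` together with `Γ(1) = 1` bounds the numerator by `Γ(n/2)` (`Gamma_mul_Gamma_le`). For `n ≥ 4`
monotonicity of `Γ` on `[2, ∞)` yields `r < 1`, so `2 r^{2/n} < 2 ≤ n - 2`. For `n = 3` the bound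
reads `r ≤ 1/4`, and `2 · (1/4)^{2/3} < 2 · (1/4)^{1/2} = 1`.
-/

noncomputable section

/-- The volume `ω_m = 2 π^{(m+1)/2} / Γ((m+1)/2)` of the unit `m`-sphere. -/
def sphereVol (m : ℕ) : ℝ :=
  2 * Real.pi ^ (((m : ℝ) + 1) / 2) / Real.Gamma (((m : ℝ) + 1) / 2)

lemma sphereVol_pos (m : ℕ) : 0 < sphereVol m := by
  unfold sphereVol
  have : 0 < Real.Gamma (((m : ℝ) + 1) / 2) := Real.Gamma_pos_of_pos (by positivity)
  have := Real.pi_pos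
  positivity

/-- Convexity of `log Γ`: moving two points of `[1, ∞)` apart, to `1` and `a + b - 1`, increases
the product of the values of `Γ`. -/
lemma Gamma_mul_Gamma_le {a b : ℝ} (ha : 1 ≤ a) (hb : 1 ≤ b) :
    Real.Gamma a * Real.Gamma b ≤ Real.Gamma (a + b - 1) := by
  rcases ha.eq_or_lt with rfl | ha
  · simp
  rcases hb.eq_or_lt with rfl | hb
  · simp
  have hc : 0 < a + b - 2 := by linarith
  have hG : 0 < Real.Gamma (a + b - 1) := Real.Gamma_pos_of_pos (by linarith)
  set s := (a - 1) / (a + b - 2) with hs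
  set t := (b - 1) / (a + b - 2) with ht
  have hs0 : 0 < s := div_pos (by linarith) hc
  have ht0 : 0 < t := div_pos (by linarith) hc
  have hst : s + t = 1 := by rw [hs, ht]; field_simp; ring
  have h1 := Real.Gamma_mul_add_mul_le_rpow_Gamma_mul_rpow_Gamma (s := a + b - 1) (t := 1)
    (by linarith) one_pos hs0 ht0 hst
  have h2 := Real.Gamma_mul_add_mul_le_rpow_Gamma_mul_rpow_Gamma (s := a + b - 1) (t := 1)
    (by linarith) one_pos ht0 hs0 (by linarith)
  have e1 : s * (a + b - 1) + t * 1 = a := by rw [hs, ht]; field_simp; ring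
  have e2 : t * (a + b - 1) + s * 1 = b := by rw [hs, ht]; field_simp; ring
  rw [e1, Real.Gamma_one, Real.one_rpow, mul_one] at h1
  rw [e2, Real.Gamma_one, Real.one_rpow, mul_one] at h2
  calc Real.Gamma a * Real.Gamma b
      ≤ Real.Gamma (a + b - 1) ^ s * Real.Gamma (a + b - 1) ^ t :=
        mul_le_mul h1 h2 (Real.Gamma_pos_of_pos (by linarith)).le (by positivity)
    _ = Real.Gamma (a + b - 1) := by rw [← Real.rpow_add hG, hst, Real.rpow_one]

lemma sphereVol_ratio_le {n k m : ℕ} (hk : 1 ≤ k) (hm : 1 ≤ m) (h : k + m = n) :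
    sphereVol n / (sphereVol k * sphereVol m) ≤
      Real.Gamma ((n : ℝ) / 2) / (2 * √Real.pi * Real.Gamma (((n : ℝ) + 1) / 2)) := by
  have hk' : (1 : ℝ) ≤ k := by exact_mod_cast hk
  have hm' : (1 : ℝ) ≤ m := by exact_mod_cast hm
  have hn : (n : ℝ) = k + m := by exact_mod_cast h.symm
  have hG := Gamma_mul_Gamma_le (a := ((k : ℝ) + 1) / 2) (b := ((m : ℝ) + 1) / 2)
    (by linarith) (by linarith)
  rw [show ((k : ℝ) + 1) / 2 + ((m : ℝ) + 1) / 2 - 1 = (n : ℝ) / 2 by rw [hn]; ring] at hG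
  have gk : 0 < Real.Gamma (((k : ℝ) + 1) / 2) := Real.Gamma_pos_of_pos (by positivity)
  have gm : 0 < Real.Gamma (((m : ℝ) + 1) / 2) := Real.Gamma_pos_of_pos (by positivity)
  have gn : 0 < Real.Gamma (((n : ℝ) + 1) / 2) := Real.Gamma_pos_of_pos (by positivity)
  have hpi := Real.pi_pos
  have hpow : Real.pi ^ (((k : ℝ) + 1) / 2) * Real.pi ^ (((m : ℝ) + 1) / 2) =
      Real.pi ^ (((n : ℝ) + 1) / 2) * √Real.pi := by
    rw [Real.sqrt_eq_rpow, ← Real.rpow_add hpi, ← Real.rpow_add hpi, hn]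
    congr 1
    ring
  have heq : sphereVol n / (sphereVol k * sphereVol m) =
      Real.Gamma (((k : ℝ) + 1) / 2) * Real.Gamma (((m : ℝ) + 1) / 2) /
        (2 * √Real.pi * Real.Gamma (((n : ℝ) + 1) / 2)) := by
    have e : sphereVol k * sphereVol m =
        4 * (Real.pi ^ (((n : ℝ) + 1) / 2) * √Real.pi) /
          (Real.Gamma (((k : ℝ) + 1) / 2) * Real.Gamma (((m : ℝ) + 1) / 2)) := by
      rw [← hpow]; unfold sphereVol; field_simp; norm_num
    rw [e]
    unfold sphereVol
    have : 0 < Real.pi ^ (((n : ℝ) + 1) / 2) := by positivity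
    have : 0 < √Real.pi := by positivity
    field_simp
    norm_num
  rw [heq]
  gcongr

lemma two_mul_ratio_rpow_lt {n k m : ℕ} (hn : 3 ≤ n) (hk : 1 ≤ k) (hm : 1 ≤ m) (h : k + m = n) :
    2 * (sphereVol n / (sphereVol k * sphereVol m)) ^ (2 / (n : ℝ)) < (n : ℝ) - 2 := by
  have hle := sphereVol_ratio_le hk hm h
  have hr : 0 < sphereVol n / (sphereVol k * sphereVol m) :=
    div_pos (sphereVol_pos _) (mul_pos (sphereVol_pos _) (sphereVol_pos _))
  set r := sphereVol n / (sphereVol k * sphereVol m)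
  have hsq : 1 < √Real.pi := by
    rw [Real.lt_sqrt] <;> nlinarith [Real.pi_gt_three]
  rcases hn.eq_or_lt with h3 | h4
  · have h3' : (n : ℝ) = 3 := by exact_mod_cast h3.symm
    rw [h3'] at hle ⊢
    have hG : Real.Gamma (3 / 2) = 1 / 2 * √Real.pi := by
      rw [show (3 / 2 : ℝ) = 1 / 2 + 1 by norm_num, Real.Gamma_add_one (by norm_num),
        Real.Gamma_one_half_eq]
    rw [hG, show ((3 : ℝ) + 1) / 2 = 2 by norm_num, Real.Gamma_two] at hle
    have hr4 : r ≤ 1 / 4 := hle.trans_eq (by field_simp; norm_num)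
    have : r ^ ((2 : ℝ) / 3) < 1 / 2 := by
      calc r ^ ((2 : ℝ) / 3) ≤ (1 / 4 : ℝ) ^ ((2 : ℝ) / 3) := by gcongr
        _ < (1 / 4 : ℝ) ^ ((1 : ℝ) / 2) :=
          Real.rpow_lt_rpow_of_exponent_gt (by norm_num) (by norm_num) (by norm_num)
        _ = 1 / 2 := by
          rw [← Real.sqrt_eq_rpow, show (1 / 4 : ℝ) = (1 / 2) ^ 2 by norm_num]
          exact Real.sqrt_sq (by norm_num)
    linarith
  · have h4' : (4 : ℝ) ≤ n := by exact_mod_cast h4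
    have hmono : Real.Gamma ((n : ℝ) / 2) < Real.Gamma (((n : ℝ) + 1) / 2) :=
      Real.Gamma_strictMonoOn_Ici (Set.mem_Ici.2 (by linarith)) (Set.mem_Ici.2 (by linarith))
        (by linarith)
    have gn : 0 < Real.Gamma (((n : ℝ) + 1) / 2) := Real.Gamma_pos_of_pos (by positivity)
    have hr1 : r < 1 := hle.trans_lt (by
      rw [div_lt_one (by positivity)]
      nlinarith)
    have : r ^ (2 / (n : ℝ)) < 1 := Real.rpow_lt_one hr.le hr1 (by positivity)
    linarith

/-- The two-point entropy bound `p^p q^q ≥ 1/2`, from weighted AM-GM applied to `1/p` and `1/q`. -/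
lemma half_le_rpow_mul_rpow {p q : ℝ} (hp : 0 < p) (hq : 0 < q) (h : p + q = 1) :
    1 / 2 ≤ p ^ p * q ^ q := by
  have := Real.geom_mean_le_arith_mean2_weighted hp.le hq.le (inv_pos.2 hp).le (inv_pos.2 hq).le h
  rw [Real.inv_rpow hp.le, Real.inv_rpow hq.le, mul_inv_cancel₀ hp.ne', mul_inv_cancel₀ hq.ne',
    ← mul_inv] at this
  have hpos : 0 < p ^ p * q ^ q := by positivity
  rw [inv_le_comm₀ hpos (by norm_num)] at this
  linarith

/-- For `n ≥ 3`, `1 ≤ k ≤ n−1`, one has `0 < (ω_n/μ_{n,k})^{2/n} < n−2`, where `μ_{n,k}` is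
the volume of `S^k(√(k/n)) × S^{n−k}(√((n−k)/n))`. -/
theorem volume_ratio_lt (n k : ℕ) (hn : 3 ≤ n) (hk1 : 1 ≤ k) (hk2 : k ≤ n - 1) :
    0 < (sphereVol n /
        (((k : ℝ) / (n : ℝ)) ^ ((k : ℝ) / 2) * (((n : ℝ) - (k : ℝ)) / (n : ℝ)) ^
            (((n : ℝ) - (k : ℝ)) / 2) * sphereVol k * sphereVol (n - k))) ^ (2 / (n : ℝ)) ∧
      (sphereVol n /
        (((k : ℝ) / (n : ℝ)) ^ ((k : ℝ) / 2) * (((n : ℝ) - (k : ℝ)) / (n : ℝ)) ^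
            (((n : ℝ) - (k : ℝ)) / 2) * sphereVol k * sphereVol (n - k))) ^ (2 / (n : ℝ)) <
        (n : ℝ) - 2 := by
  have hn0 : (0 : ℝ) < n := by exact_mod_cast (by omega : 0 < n)
  have hk0 : (0 : ℝ) < k := by exact_mod_cast hk1
  have hm0 : (0 : ℝ) < (n : ℝ) - k := sub_pos.2 (by exact_mod_cast (by omega : k < n))
  have hω := sphereVol_pos n
  have hωk := sphereVol_pos k
  have hωm := sphereVol_pos (n - k)
  have hp : 0 < (k : ℝ) / n := by positivity
  have hq : 0 < ((n : ℝ) - k) / n := by positivity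
  refine ⟨by positivity, ?_⟩
  have hmain := two_mul_ratio_rpow_lt hn hk1 (by omega : 1 ≤ n - k) (by omega)
  have hent := half_le_rpow_mul_rpow hp hq (by field_simp; ring)
  have hr : 0 < sphereVol n / (sphereVol k * sphereVol (n - k)) := by positivity
  set r := sphereVol n / (sphereVol k * sphereVol (n - k)) with hrdef
  set p := (k : ℝ) / n with hpdef
  set q := ((n : ℝ) - k) / n with hqdef
  have e : sphereVol n / (p ^ ((k : ℝ) / 2) * q ^ (((n : ℝ) - k) / 2) * sphereVol k *
      sphereVol (n - k)) = r / (p ^ ((k : ℝ) / 2) * q ^ (((n : ℝ) - k) / 2)) := by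
    rw [hrdef, div_div]
    congr 1
    ring
  have e2 : (p ^ ((k : ℝ) / 2) * q ^ (((n : ℝ) - k) / 2)) ^ (2 / (n : ℝ)) = p ^ p * q ^ q := by
    rw [Real.mul_rpow (by positivity) (by positivity), ← Real.rpow_mul hp.le,
      ← Real.rpow_mul hq.le]
    congr 2
    · rw [hpdef]; field_simp
    · rw [hqdef]; field_simp
  rw [e, Real.div_rpow hr.le (by positivity), e2]
  refine lt_of_le_of_lt ?_ hmain
  rw [div_le_iff₀ (by positivity)]
  have : 0 < r ^ (2 / (n : ℝ)) := by positivity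
  nlinarith

end
end

section
/- For every integer n ≥ 1, (2π² · ω_{4n} / ω_{4n+3})^{1/(2n)} ≤ 16n(n+2), where ω_m denotes the volume of the unit m-sphere as defined in the context. -/
/-!
Since `Γ` is increasing on `[2, ∞)`, `Γ(2n + 1/2) ≥ Γ(2n)`, so
`2π² ω_{4n} / ω_{4n+3} = 2 √π Γ(2n+2) / Γ(2n+1/2) ≤ 2 √π (2n+1)(2n) ≤ 8n(2n+1) ≤ 16n(n+2)`.
As the right-hand side is at least `1`, it still dominates after taking the `2n`-th root.
-/

noncomputable section

/-- For every `n ≥ 1`, `(2π² ω_{4n} / ω_{4n+3})^{1/(2n)} ≤ 16n(n+2)`. -/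
theorem sphere_vol_ratio_quaternion (n : ℕ) (hn : 1 ≤ n) :
    (2 * Real.pi ^ 2 * sphereVol (4 * n) / sphereVol (4 * n + 3)) ^ (1 / (2 * (n : ℝ))) ≤
      16 * (n : ℝ) * ((n : ℝ) + 2) := by
  have hn1 : (1 : ℝ) ≤ n := by exact_mod_cast hn
  have hpi := Real.pi_pos
  have hG0 : 0 < Real.Gamma (2 * (n : ℝ)) := Real.Gamma_pos_of_pos (by linarith)
  have hG1 : 0 < Real.Gamma (2 * (n : ℝ) + 1 / 2) := Real.Gamma_pos_of_pos (by linarith)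
  have hmono : Real.Gamma (2 * (n : ℝ)) ≤ Real.Gamma (2 * (n : ℝ) + 1 / 2) :=
    Real.Gamma_strictMonoOn_Ici.monotoneOn (Set.mem_Ici.2 (by linarith))
      (Set.mem_Ici.2 (by linarith)) (by linarith)
  have hG2 : Real.Gamma (2 * (n : ℝ) + 2) =
      (2 * n + 1) * ((2 * n) * Real.Gamma (2 * (n : ℝ))) := by
    rw [← Real.Gamma_add_one (by linarith), ← Real.Gamma_add_one (by linarith)]
    ring_nf
  have e1 : (((4 * n : ℕ) : ℝ) + 1) / 2 = 2 * (n : ℝ) + 1 / 2 := by push_cast; ring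
  have e2 : (((4 * n + 3 : ℕ) : ℝ) + 1) / 2 = 2 * (n : ℝ) + 2 := by push_cast; ring
  have hp : Real.pi ^ (2 * (n : ℝ) + 2) * Real.pi ^ (1 / 2 : ℝ) =
      Real.pi ^ (2 * (n : ℝ) + 1 / 2) * Real.pi ^ 2 := by
    rw [← Real.rpow_natCast Real.pi 2, ← Real.rpow_add hpi, ← Real.rpow_add hpi]
    push_cast
    ring_nf
  have hratio : 2 * Real.pi ^ 2 * sphereVol (4 * n) / sphereVol (4 * n + 3) =
      2 * √Real.pi * (Real.Gamma (2 * (n : ℝ) + 2) / Real.Gamma (2 * (n : ℝ) + 1 / 2)) := by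
    unfold sphereVol
    rw [e1, e2, Real.sqrt_eq_rpow]
    have h2 : 0 < Real.Gamma (2 * (n : ℝ) + 2) := Real.Gamma_pos_of_pos (by linarith)
    have h3 : 0 < Real.pi ^ (2 * (n : ℝ) + 2) := Real.rpow_pos_of_pos hpi _
    rw [div_eq_iff (by positivity), ← mul_div_assoc, ← mul_div_assoc, ← mul_div_assoc,
      div_mul_eq_mul_div, div_div, div_eq_div_iff hG1.ne' (by positivity)]
    linear_combination (-4 * Real.Gamma (2 * (n : ℝ) + 2) * Real.Gamma (2 * (n : ℝ) + 1 / 2)) * hp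
  have hsqrt : √Real.pi ≤ 2 := by
    rw [Real.sqrt_le_left (by norm_num)]
    linarith [Real.pi_le_four]
  have hG : Real.Gamma (2 * (n : ℝ) + 2) / Real.Gamma (2 * (n : ℝ) + 1 / 2) ≤
      (2 * n + 1) * (2 * n) := by
    rw [div_le_iff₀ hG1, hG2, ← mul_assoc]
    gcongr
  have hG' : 0 ≤ Real.Gamma (2 * (n : ℝ) + 2) / Real.Gamma (2 * (n : ℝ) + 1 / 2) := by
    rw [hG2]; positivity
  have hA : (1 : ℝ) ≤ 16 * n * (n + 2) := by nlinarith
  calc _ ≤ (16 * (n : ℝ) * ((n : ℝ) + 2)) ^ (1 / (2 * (n : ℝ))) := by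
        rw [hratio]
        refine Real.rpow_le_rpow (by positivity) ?_ (by positivity)
        calc _ ≤ 2 * 2 * ((2 * (n : ℝ) + 1) * (2 * n)) := by gcongr
          _ ≤ _ := by nlinarith
    _ ≤ (16 * (n : ℝ) * ((n : ℝ) + 2)) ^ (1 : ℝ) := by
        refine Real.rpow_le_rpow_of_exponent_le hA ?_
        rw [div_le_one (by linarith)]
        linarith
    _ = _ := Real.rpow_one _

end
end
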